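/- arXiv:2605.12585 — 6 statements merged into one kernel-verified Lean document; each statement's English description precedes it below -/
import Mathlib

section
/- Let X, Y, Z be topological spaces, and let R ⊆ X × Y and S ⊆ Y × Z be continuous multivalued maps. Then the composition S ∘ R = {(x,z) ∈ X × Z | ∃ y ∈ Y, (x,y) ∈ R and (y,z) ∈ S} is a continuous multivalued map from X to Z. -/
/-!
Properness of a continuous map says that every ultrafilter whose image converges to `x`
already converges to some point of the fiber over `x` (`isProperMap_iff_ultrafilter`). Choose for every
point `(x, z)` of the composition an intermediate `y`. This choice is in general discontinuous,
but an ultrafilter on the composition can be pushed forward along it: properness of `R` makes the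
intermediate coordinate converge, and then properness of `S` makes the last coordinate converge.
-/

open Function Set

/-- A continuous multivalued map from `X` to `Y` is a subset `T ⊆ X × Y` such that the
restriction of the first projection to `T` is proper (continuous and universally closed),
surjective, and has finite fibers. -/
def IsMVMap {X Y : Type*} [TopologicalSpace X] [TopologicalSpace Y] (T : Set (X × Y)) : Prop :=
  IsProperMap (fun p : T => (p : X × Y).1) ∧
  Surjective (fun p : T => (p : X × Y).1) ∧
  ∀ x : X, {y : Y | (x, y) ∈ T}.Finite

/-- The composition of multivalued maps `R ⊆ X × Y` and `S ⊆ Y × Z`. -/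
def MVComp {X Y Z : Type*} (S : Set (Y × Z)) (R : Set (X × Y)) : Set (X × Z) :=
  {p : X × Z | ∃ y : Y, (p.1, y) ∈ R ∧ (y, p.2) ∈ S}

open Filter Topology in
/-- The first projection of a composition is proper as soon as the first projections of both
factors are. -/
theorem MVComp.isProperMap_fst {X Y Z : Type*} [TopologicalSpace X] [TopologicalSpace Y]
    [TopologicalSpace Z] {R : Set (X × Y)} {S : Set (Y × Z)}
    (hR : IsProperMap (fun p : R => (p : X × Y).1))
    (hS : IsProperMap (fun p : S => (p : Y × Z).1)) :
    IsProperMap (fun p : MVComp S R => (p : X × Z).1) := by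
  rw [isProperMap_iff_ultrafilter]
  refine ⟨continuous_fst.comp continuous_subtype_val, fun 𝒰 x hx => ?_⟩
  choose m hmR hmS using fun p : MVComp S R => p.2
  let r : MVComp S R → R := fun p => ⟨(p.1.1, m p), hmR p⟩
  let s : MVComp S R → S := fun p => ⟨(m p, p.1.2), hmS p⟩
  obtain ⟨⟨⟨x', y⟩, hxy⟩, hx', hr⟩ :=
    (isProperMap_iff_ultrafilter.1 hR).2 (𝒰 := 𝒰.map r) (y := x) hx
  obtain rfl : x' = x := hx'
  have hr : Tendsto r 𝒰 (𝓝 ⟨(x', y), hxy⟩) := hr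
  have hm : Tendsto m 𝒰 (𝓝 y) :=
    ((continuous_snd.comp continuous_subtype_val).tendsto (⟨(x', y), hxy⟩ : R)).comp hr
  obtain ⟨⟨⟨y', z⟩, hyz⟩, hy', hs⟩ :=
    (isProperMap_iff_ultrafilter.1 hS).2 (𝒰 := 𝒰.map s) (y := y) hm
  obtain rfl : y' = y := hy'
  have hs : Tendsto s 𝒰 (𝓝 ⟨(y', z), hyz⟩) := hs
  have hz : Tendsto (fun p : MVComp S R => p.1.2) 𝒰 (𝓝 z) :=
    ((continuous_snd.comp continuous_subtype_val).tendsto (⟨(y', z), hyz⟩ : S)).comp hs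
  refine ⟨⟨(x', z), y', hxy, hyz⟩, rfl, ?_⟩
  rw [nhds_induced, ← tendsto_iff_comap]
  exact hx.prodMk_nhds hz

theorem mvcomp_isMVMap {X Y Z : Type*} [TopologicalSpace X] [TopologicalSpace Y]
    [TopologicalSpace Z] (R : Set (X × Y)) (S : Set (Y × Z))
    (hR : IsMVMap R) (hS : IsMVMap S) : IsMVMap (MVComp S R) := by
  obtain ⟨hRp, hRs, hRf⟩ := hR
  obtain ⟨hSp, hSs, hSf⟩ := hS
  refine ⟨MVComp.isProperMap_fst hRp hSp, fun x => ?_, fun x => ?_⟩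
  · obtain ⟨⟨⟨_, y⟩, hxy⟩, rfl⟩ := hRs x
    obtain ⟨⟨⟨_, z⟩, hyz⟩, rfl⟩ := hSs y
    exact ⟨⟨(_, z), _, hxy, hyz⟩, rfl⟩
  · refine ((hRf x).biUnion fun y _ => hSf y).subset ?_
    rintro z ⟨y, hxy, hyz⟩
    exact mem_biUnion (show y ∈ {y | (x, y) ∈ R} from hxy) hyz
end

section
/- Let X, Y, Z be topological spaces, f : X → Y a continuous (single-valued) map, and S ⊆ Y × Z a continuous multivalued map. Then the preimage (f × id_Z)⁻¹(S) = {(x,z) ∈ X × Z | (f(x),z) ∈ S} equals the composition S ∘ gr(f), where gr(f) = {(x,f(x)) | x ∈ X}, and this set is a continuous multivalued map from X to Z. -/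
/-!
The preimage of `S` under `f × id` is the fibre product `X ×_Y S`, and its projection to `X` is the
base change along `f` of the projection `S → Y`. Properness, surjectivity and finiteness of fibres
are stable under base change; the only one needing an argument is properness, which is
`isProperMap_fst_preimage`. The equality with the composition holds because `f x` is the only `y`
with `(x, y)` in the graph of `f`.
-/

open Function Set

/-- The graph of a single-valued map. -/
def MVGraph {X Y : Type*} (f : X → Y) : Set (X × Y) := {p : X × Y | p.2 = f p.1}

/-- Properness of the first projection is stable under base change along `f`, checked on
ultrafilters: push an ultrafilter on the preimage forward to `S`, take a limit `(f x, z)` there,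
and use that the preimage carries the topology induced from `X × Z`, so that convergence to
`(x, z)` is convergence of both coordinates. -/
lemma isProperMap_fst_preimage {X Y Z : Type*} [TopologicalSpace X]
    [TopologicalSpace Y] [TopologicalSpace Z] {f : X → Y} (hf : Continuous f)
    {S : Set (Y × Z)} (hS : IsProperMap (fun p : S => (p : Y × Z).1)) :
    IsProperMap (fun p : {p : X × Z | (f p.1, p.2) ∈ S} => (p : X × Z).1) := by
  refine isProperMap_iff_ultrafilter.2 ⟨by fun_prop, fun U x hx => ?_⟩
  let g : {p : X × Z | (f p.1, p.2) ∈ S} → S := fun p => ⟨(f p.1.1, p.1.2), p.2⟩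
  have hg : Filter.Tendsto (fun p : S => (p : Y × Z).1) (U.map g) (nhds (f x)) :=
    Filter.tendsto_map'_iff.2 ((hf.tendsto x).comp hx)
  obtain ⟨⟨⟨y, z⟩, hyz⟩, rfl : y = f x, hlim⟩ := hS.ultrafilter_le_nhds_of_tendsto hg
  refine ⟨⟨(x, z), hyz⟩, rfl, ?_⟩
  have hz : Filter.Tendsto (fun p : {p : X × Z | (f p.1, p.2) ∈ S} => (p : X × Z).2) U
      (nhds z) :=
    ((continuous_snd.comp continuous_subtype_val).tendsto (⟨(f x, z), hyz⟩ : S)).comp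
      (show Filter.Tendsto g U _ from hlim)
  exact Filter.tendsto_id'.1 (tendsto_subtype_rng.2 (hx.prodMk_nhds hz))

theorem preimage_eq_mvComp_graph_and_isMVMap {X Y Z : Type*} [TopologicalSpace X]
    [TopologicalSpace Y] [TopologicalSpace Z] (f : X → Y) (hf : Continuous f)
    (S : Set (Y × Z)) (hS : IsMVMap S) :
    {p : X × Z | (f p.1, p.2) ∈ S} = MVComp S (MVGraph f) ∧
      IsMVMap {p : X × Z | (f p.1, p.2) ∈ S} := by
  refine ⟨?_, isProperMap_fst_preimage hf hS.1, fun x => ?_, fun x => hS.2.2 (f x)⟩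
  · ext ⟨x, z⟩
    simp [MVComp, MVGraph]
  · obtain ⟨⟨⟨y, z⟩, hyz⟩, rfl : y = f x⟩ := hS.2.1 (f x)
    exact ⟨⟨(x, z), hyz⟩, rfl⟩
end

section
/- Let X be a compact Hausdorff topological space and x₀ ∈ X. Then the identity multivalued map and the constant multivalued map with value {x₀} are M-homotopic: there exists a continuous multivalued map L ⊆ (X × [0,1]) × X such that {(x,y) ∈ X × X | ((x,0),y) ∈ L} = {(x,x) | x ∈ X} and {(x,y) ∈ X × X | ((x,1),y) ∈ L} = X × {x₀}. -/
open Function Set unitInterval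

/-- In a compact Hausdorff space, the identity multivalued map is `M`-homotopic to the
constant multivalued map with value `{x₀}`. -/
theorem id_mhomotopic_const {X : Type*} [TopologicalSpace X] [CompactSpace X] [T2Space X]
    (x₀ : X) :
    ∃ L : Set ((X × I) × X), IsMVMap L ∧
      {p : X × X | ((p.1, (0 : I)), p.2) ∈ L} = {p : X × X | p.2 = p.1} ∧
      {p : X × X | ((p.1, (1 : I)), p.2) ∈ L} = (univ : Set X) ×ˢ {x₀} := by
  -- The identity on `[0, 1/2]` and the constant on `[1/2, 1]`: both branches are present at
  -- `t = 1/2`, so `L` is closed in a compact Hausdorff space, and its projection is proper.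
  have hc : IsClosed {p : (X × I) × X | (p.2 = p.1.1 ∧ (p.1.2 : ℝ) ≤ 1 / 2) ∨
      (p.2 = x₀ ∧ 1 / 2 ≤ (p.1.2 : ℝ))} := by
    simp only [ofPred_or, ofPred_and]
    refine (IsClosed.inter ?_ ?_).union (IsClosed.inter ?_ ?_)
    · exact isClosed_eq (by fun_prop) (by fun_prop)
    · exact isClosed_le (by fun_prop) (by fun_prop)
    · exact isClosed_eq (by fun_prop) (by fun_prop)
    · exact isClosed_le (by fun_prop) (by fun_prop)
  refine ⟨{p : (X × I) × X | (p.2 = p.1.1 ∧ (p.1.2 : ℝ) ≤ 1 / 2) ∨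
      (p.2 = x₀ ∧ 1 / 2 ≤ (p.1.2 : ℝ))}, ⟨?_, ?_, ?_⟩, ?_, ?_⟩
  · have := isCompact_iff_compactSpace.mp hc.isCompact
    exact Continuous.isProperMap (by fun_prop)
  · rintro ⟨x, t⟩
    rcases le_total (t : ℝ) (1 / 2) with h | h
    · exact ⟨⟨((x, t), x), Or.inl ⟨rfl, h⟩⟩, rfl⟩
    · exact ⟨⟨((x, t), x₀), Or.inr ⟨rfl, h⟩⟩, rfl⟩
  · rintro ⟨x, t⟩
    refine (Set.toFinite {x, x₀}).subset ?_
    rintro y (⟨h, -⟩ | ⟨h, -⟩)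
    · exact Or.inl h
    · exact Or.inr h
  · ext ⟨x, y⟩
    norm_num
  · ext ⟨x, y⟩
    norm_num
end

section
/- Let X be a compact Hausdorff topological space and x₀ ∈ X. Then the set L = {((x,t),y) ∈ (X × [0,1]) × X | (t ≤ 1/2 and y = x) or (t ≥ 1/2 and y = x₀)} is a continuous multivalued map from X × [0,1] to X, it equals the closure in (X × [0,1]) × X of the graph of the (discontinuous) map L'(x,t) = x for t < 1/2 and L'(x,t) = x₀ for t ≥ 1/2, and it satisfies {(x,y) | ((x,0),y) ∈ L} = {(x,x) | x ∈ X} and {(x,y) | ((x,1),y) ∈ L} = X × {x₀}. -/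
/-!
The set `L` is closed, being a union of two sets cut out by continuous equalities and
inequalities in Hausdorff spaces. Since the target `X` is compact, the projection
`(X × I) × X → X × I` is proper, hence so is its restriction to the closed set `L`; the fiber over
`(x, t)` is a nonempty subset of `{x, x₀}`.

The graph of `L'` is contained in `L`, and the only points of `L` it may miss are `((x, 1/2), x)`.
These are limits of the points `((x, s), x)` with `s < 1/2`, so `L` is the closure of the graph.
-/

open Function Set unitInterval

theorem explicit_mhomotopy {X : Type*} [TopologicalSpace X] [CompactSpace X] [T2Space X]
    (x₀ : X)
    (L : Set ((X × I) × X))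
    (hL : L = {p : (X × I) × X |
      ((p.1.2 : ℝ) ≤ 1 / 2 ∧ p.2 = p.1.1) ∨ ((p.1.2 : ℝ) ≥ 1 / 2 ∧ p.2 = x₀)})
    (L' : X × I → X)
    (hL' : L' = fun p => if (p.2 : ℝ) < 1 / 2 then p.1 else x₀) :
    IsMVMap L ∧
      L = closure {p : (X × I) × X | p.2 = L' p.1} ∧
      {p : X × X | ((p.1, (0 : I)), p.2) ∈ L} = {p : X × X | p.2 = p.1} ∧
      {p : X × X | ((p.1, (1 : I)), p.2) ∈ L} = (univ : Set X) ×ˢ {x₀} := by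
  have hmem : ∀ x t y, ((x, t), y) ∈ L ↔
      ((t : ℝ) ≤ 1 / 2 ∧ y = x) ∨ ((t : ℝ) ≥ 1 / 2 ∧ y = x₀) := by
    intro x t y
    rw [hL]
    rfl
  have hclosed : IsClosed L := by
    rw [hL]
    have hle : IsClosed {p : (X × I) × X | (p.1.2 : ℝ) ≤ 1 / 2} :=
      isClosed_le (by fun_prop) (by fun_prop)
    have hge : IsClosed {p : (X × I) × X | (p.1.2 : ℝ) ≥ 1 / 2} :=
      isClosed_le (by fun_prop) (by fun_prop)
    have hdiag : IsClosed {p : (X × I) × X | p.2 = p.1.1} :=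
      isClosed_eq (by fun_prop) (by fun_prop)
    have hconst : IsClosed {p : (X × I) × X | p.2 = x₀} :=
      isClosed_eq (by fun_prop) (by fun_prop)
    exact (hle.inter hdiag).union (hge.inter hconst)
  refine ⟨⟨?_, ?_, ?_⟩, ?_, ?_, ?_⟩
  · exact isProperMap_fst_of_compactSpace.comp hclosed.isClosedEmbedding_subtypeVal.isProperMap
  · rintro ⟨x, t⟩
    rcases le_total (t : ℝ) (1 / 2) with h | h
    · exact ⟨⟨((x, t), x), (hmem _ _ _).2 (Or.inl ⟨h, rfl⟩)⟩, rfl⟩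
    · exact ⟨⟨((x, t), x₀), (hmem _ _ _).2 (Or.inr ⟨h, rfl⟩)⟩, rfl⟩
  · rintro ⟨x, t⟩
    refine (Set.toFinite {x, x₀}).subset fun y hy => ?_
    rcases (hmem _ _ _).1 hy with h | h
    · exact Or.inl h.2
    · exact Or.inr h.2
  · refine Subset.antisymm ?_ (closure_minimal ?_ hclosed)
    · rintro ⟨⟨x, t⟩, y⟩ hp
      rcases (hmem _ _ _).1 hp with ⟨ht, rfl⟩ | ⟨ht, rfl⟩
      · let c : I := ⟨1 / 2, by norm_num, by norm_num⟩
        have hne : (Iio c).Nonempty := ⟨0, show ((0 : I) : ℝ) < 1 / 2 by norm_num⟩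
        have htc : t ∈ closure (Iio c) := by
          rw [closure_Iio' hne]
          exact ht
        refine map_mem_closure (f := fun s : I => ((y, s), y)) (by fun_prop) htc fun s hs => ?_
        have hs' : (s : ℝ) < 1 / 2 := hs
        simp only [hL', mem_ofPred_eq, if_pos hs']
      · apply subset_closure
        simp only [hL', mem_ofPred_eq, if_neg (not_lt.2 ht)]
    · rintro ⟨⟨x, t⟩, y⟩ hp
      simp only [hL', mem_ofPred_eq] at hp
      rw [hmem]
      split_ifs at hp with h
      · exact Or.inl ⟨h.le, hp⟩
      · exact Or.inr ⟨not_lt.1 h, hp⟩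
  · ext ⟨x, y⟩
    simp only [mem_ofPred_eq, hmem]
    norm_num
  · ext ⟨x, y⟩
    simp only [mem_ofPred_eq, hmem, mem_prod, mem_univ, mem_singleton_iff]
    norm_num
end

section
/- Let X and Y be topological spaces and let X₁, …, Xₙ be a finite cover of X by closed subsets. For each i, let Tᵢ ⊆ Xᵢ × Y be such that Tᵢ, viewed as a subset of Xᵢ × Y with Xᵢ carrying the subspace topology, is a continuous multivalued map from Xᵢ to Y, and suppose Tᵢ ∩ ((Xᵢ ∩ Xⱼ) × Y) = Tⱼ ∩ ((Xᵢ ∩ Xⱼ) × Y) for all i, j. Then T = ⋃ᵢ Tᵢ ⊆ X × Y is a continuous multivalued map from X to Y, it satisfies T ∩ (Xᵢ × Y) = Tᵢ for all i, and it is the unique continuous multivalued map from X to Y with this restriction property. -/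
/-!
Properness descends along finite families of continuous maps that jointly cover the source: if
`f ∘ g i` is proper for each of finitely many continuous `g i : B i → A` with `⋃ i, range (g i) = A`,
then the continuous map `f` is proper. Indeed, an ultrafilter on `A` contains some `range (g i)`,
hence lifts to `B i`, where a limit exists and can be pushed forward to `A`.

This is applied with `A = ⋃ i, Ts i` and `B i` the piece of the multivalued map over `Xs i`; the
composites are proper because `Xs i ↪ X` is, `Xs i` being closed. By compatibility, the part of
`⋃ j, Ts j` lying over `Xs i` is exactly `Ts i`, which yields finiteness of the fibers and
the restriction property. Uniqueness holds since the `Xs i` cover `X`.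
-/

open Function Set

/-- The restriction of `T ⊆ X × Y` to a subspace `A ⊆ X`, viewed as a subset of `↥A × Y`. -/
def MVRestrict {X Y : Type*} (A : Set X) (T : Set (X × Y)) : Set (↥A × Y) :=
  {p : ↥A × Y | ((p.1 : X), p.2) ∈ T}

open Filter Topology in
/-- A continuous map is proper as soon as it is proper after composing with each member of a
finite, jointly surjective family of continuous maps. -/
lemma isProperMap_of_finite_cover {ι A X : Type*} [Finite ι] {B : ι → Type*}
    [TopologicalSpace A] [TopologicalSpace X] [∀ i, TopologicalSpace (B i)]
    {f : A → X} (hf : Continuous f) (g : ∀ i, B i → A) (hg : ∀ i, Continuous (g i))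
    (hcov : ∀ a, ∃ i b, g i b = a) (hp : ∀ i, IsProperMap (f ∘ g i)) : IsProperMap f := by
  rw [isProperMap_iff_ultrafilter]
  refine ⟨hf, fun 𝒰 x hx => ?_⟩
  have hmem : (⋃ i, range (g i)) ∈ 𝒰 := by
    have : (⋃ i, range (g i)) = univ := by
      ext a
      simpa using hcov a
    rw [this]
    exact univ_mem
  obtain ⟨i, hi⟩ : ∃ i, range (g i) ∈ 𝒰 := Ultrafilter.eventually_exists_iff.1 <| by
    filter_upwards [hmem] with a ha using mem_iUnion.1 ha
  have : NeBot (comap (g i) (𝒰 : Filter A)) := comap_neBot_iff_frequently.2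
    (Eventually.frequently hi)
  have hle : map (g i) (Ultrafilter.of (comap (g i) (𝒰 : Filter A)) : Filter (B i)) ≤ 𝒰 :=
    map_le_iff_le_comap.2 (Ultrafilter.of_le _)
  have heq : (Ultrafilter.of (comap (g i) (𝒰 : Filter A))).map (g i) = 𝒰 :=
    Ultrafilter.coe_le_coe.1 hle
  obtain ⟨b, hb, hlim⟩ := (hp i).ultrafilter_le_nhds_of_tendsto
    (𝒰 := Ultrafilter.of (comap (g i) (𝒰 : Filter A))) (y := x)
    (hx.comp (tendsto_iff_comap.2 (Ultrafilter.of_le _)))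
  refine ⟨g i b, hb, ?_⟩
  rw [← heq]
  exact ((hg i).tendsto b).mono_left hlim

theorem glue_mvMaps {X Y : Type*} [TopologicalSpace X] [TopologicalSpace Y]
    (n : ℕ) (Xs : Fin n → Set X) (hclosed : ∀ i, IsClosed (Xs i))
    (hcover : ⋃ i, Xs i = univ)
    (Ts : Fin n → Set (X × Y)) (hsub : ∀ i, Ts i ⊆ Xs i ×ˢ (univ : Set Y))
    (hmv : ∀ i, IsMVMap (MVRestrict (Xs i) (Ts i)))
    (hcompat : ∀ i j, Ts i ∩ ((Xs i ∩ Xs j) ×ˢ (univ : Set Y))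
      = Ts j ∩ ((Xs i ∩ Xs j) ×ˢ (univ : Set Y))) :
    IsMVMap (⋃ i, Ts i) ∧
      (∀ i, (⋃ j, Ts j) ∩ (Xs i ×ˢ (univ : Set Y)) = Ts i) ∧
      (∀ T' : Set (X × Y), IsMVMap T' →
        (∀ i, T' ∩ (Xs i ×ˢ (univ : Set Y)) = Ts i) → T' = ⋃ i, Ts i) := by
  have mem_iff : ∀ i x y, x ∈ Xs i → ((x, y) ∈ ⋃ j, Ts j) → (x, y) ∈ Ts i := by
    intro i x y hx h
    obtain ⟨j, hj⟩ := mem_iUnion.1 h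
    have h' : (x, y) ∈ Ts j ∩ ((Xs i ∩ Xs j) ×ˢ (univ : Set Y)) :=
      ⟨hj, ⟨hx, (hsub j hj).1⟩, mem_univ _⟩
    rw [← hcompat i j] at h'
    exact h'.1
  have cov : ∀ x, ∃ i, x ∈ Xs i := fun x => by
    simpa using hcover.ge (mem_univ x)
  refine ⟨⟨?_, ?_, ?_⟩, ?_, ?_⟩
  · refine isProperMap_of_finite_cover (B := fun i => MVRestrict (Xs i) (Ts i)) (by fun_prop)
      (fun i p => ⟨((p.1.1 : X), p.1.2), mem_iUnion.2 ⟨i, p.2⟩⟩) (fun i => by fun_prop) ?_ ?_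
    · rintro ⟨⟨x, y⟩, h⟩
      obtain ⟨i, hi⟩ := mem_iUnion.1 h
      exact ⟨i, ⟨(⟨x, (hsub i hi).1⟩, y), hi⟩, rfl⟩
    · exact fun i => (hclosed i).isProperMap_subtypeVal.comp (hmv i).1
  · intro x
    obtain ⟨i, hx⟩ := cov x
    obtain ⟨⟨⟨x', y⟩, h⟩, hxx⟩ := (hmv i).2.1 ⟨x, hx⟩
    obtain rfl : x' = ⟨x, hx⟩ := hxx
    exact ⟨⟨(x, y), mem_iUnion.2 ⟨i, h⟩⟩, rfl⟩
  · intro x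
    obtain ⟨i, hx⟩ := cov x
    exact ((hmv i).2.2 ⟨x, hx⟩).subset fun y hy => mem_iff i x y hx hy
  · intro i
    ext ⟨x, y⟩
    exact ⟨fun h => mem_iff i x y h.2.1 h.1, fun h => ⟨mem_iUnion.2 ⟨i, h⟩, hsub i h⟩⟩
  · intro T' _ hT'
    have hsplit : T' = ⋃ i, T' ∩ (Xs i ×ˢ (univ : Set Y)) := by
      rw [← inter_iUnion, ← iUnion_prod_const, hcover, univ_prod_univ, inter_univ]
    rw [hsplit]
    exact iUnion_congr hT'
end

section
/- Let X be a path-connected topological space and let A, B ⊆ X be finite nonempty subsets. Then there exists a continuous multivalued map T ⊆ [0,1] × X such that {x ∈ X | (0,x) ∈ T} = A and {x ∈ X | (1,x) ∈ T} = B. -/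
/-!
Choose a path from `a` to `b` for every `(a, b) ∈ A × B`, and let `T` be the union of the graphs of
all these paths. Its fibre over `0` is `A` because `B` is nonempty, and its fibre over `1` is `B`
because `A` is nonempty. As a finite union of continuous images of `I`, the set `T` is compact, and
a continuous map from a compact space to a Hausdorff space is proper; only the target `I` has to be
Hausdorff, so no separation hypothesis on `X` is needed.
-/

open Function Set unitInterval

theorem exists_multivalued_path {X : Type*} [TopologicalSpace X] [PathConnectedSpace X]
    (A B : Set X) (hA : A.Finite) (hA' : A.Nonempty) (hB : B.Finite) (hB' : B.Nonempty) :
    ∃ T : Set (I × X), IsMVMap T ∧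
      {x : X | ((0 : I), x) ∈ T} = A ∧ {x : X | ((1 : I), x) ∈ T} = B := by
  let γ (a b : X) : Path a b := PathConnectedSpace.somePath a b
  let T : Set (I × X) := ⋃ a ∈ A, ⋃ b ∈ B, range fun t : I => (t, γ a b t)
  have mem_T (t : I) (x : X) : (t, x) ∈ T ↔ ∃ a ∈ A, ∃ b ∈ B, γ a b t = x := by
    simp [T]
  obtain ⟨a₀, ha₀⟩ := hA'
  obtain ⟨b₀, hb₀⟩ := hB'
  have T_compact : IsCompact T :=
    hA.isCompact_biUnion fun a _ => hB.isCompact_biUnion fun b _ =>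
      isCompact_range (continuous_id.prodMk (γ a b).continuous)
  have : CompactSpace T := isCompact_iff_compactSpace.mp T_compact
  refine ⟨T, ⟨(continuous_fst.comp continuous_subtype_val).isProperMap, ?_, ?_⟩, ?_, ?_⟩
  · intro t
    exact ⟨⟨(t, γ a₀ b₀ t), (mem_T _ _).2 ⟨a₀, ha₀, b₀, hb₀, rfl⟩⟩, rfl⟩
  · intro t
    refine (hA.image2 (fun a b => γ a b t) hB).subset ?_
    intro x hx
    exact (mem_T t x).1 hx
  · ext x
    simp only [mem_ofPred_eq, mem_T, Path.source]
    exact ⟨fun ⟨a, ha, _, _, h⟩ => h ▸ ha, fun hx => ⟨x, hx, b₀, hb₀, rfl⟩⟩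
  · ext x
    simp only [mem_ofPred_eq, mem_T, Path.target]
    exact ⟨fun ⟨_, _, b, hb, h⟩ => h ▸ hb, fun hx => ⟨a₀, ha₀, x, hx, rfl⟩⟩
end
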